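/- The Bellman operator T is an α-contraction in the supremum norm: for all J, J' : X → ℝ, max_{i∈X} |(TJ)(i) − (TJ')(i)| ≤ α · max_{j∈X} |J(j) − J'(j)|. -/

import Mathlib

open Finset Filter Topology

/-!
Two minima over the same finite set differ by at most the largest difference of their entries, so
it suffices to compare the costs of one fixed action. There the one-stage costs cancel, and what
remains is `α` times an average of `J - J'`.
-/

lemma inf'_le_inf'_add_of_le_add {ι G : Type*} [Add G] [LinearOrder G] {s : Finset ι}
    {f g : ι → G} {c : G} (hs : s.Nonempty) (h : ∀ i ∈ s, f i ≤ g i + c) :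
    s.inf' hs f ≤ s.inf' hs g + c := by
  obtain ⟨i, hi, hgi⟩ := s.exists_mem_eq_inf' hs g
  calc s.inf' hs f ≤ f i := s.inf'_le f hi
    _ ≤ g i + c := h i hi
    _ = s.inf' hs g + c := by rw [hgi]

lemma abs_inf'_sub_inf'_le {ι G : Type*} [AddCommGroup G] [LinearOrder G] [IsOrderedAddMonoid G]
    {s : Finset ι} {f g : ι → G} {c : G} (hs : s.Nonempty) (h : ∀ i ∈ s, |f i - g i| ≤ c) :
    |s.inf' hs f - s.inf' hs g| ≤ c := by
  simp only [abs_sub_le_iff, sub_le_iff_le_add'] at h ⊢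
  exact ⟨inf'_le_inf'_add_of_le_add hs fun i hi => (h i hi).1,
    inf'_le_inf'_add_of_le_add hs fun i hi => (h i hi).2⟩

lemma abs_sum_mul_le_sum_abs_mul {ι R : Type*} [Ring R] [LinearOrder R] [IsOrderedRing R]
    {s : Finset ι} {w x : ι → R} {c : R} (hx : ∀ i ∈ s, |x i| ≤ c) :
    |∑ i ∈ s, w i * x i| ≤ (∑ i ∈ s, |w i|) * c :=
  calc |∑ i ∈ s, w i * x i| ≤ ∑ i ∈ s, |w i * x i| := s.abs_sum_le_sum_abs _
    _ = ∑ i ∈ s, |w i| * |x i| := by simp only [abs_mul]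
    _ ≤ ∑ i ∈ s, |w i| * c := by gcongr with i hi; exact hx i hi
    _ = (∑ i ∈ s, |w i|) * c := (s.sum_mul _ c).symm

section Bellman

variable {X R : Type*} {A : X → Type*} [Fintype X] [CommRing R]

/-- The Q-factor of action `u` in state `i`: the expected one-stage cost plus the discounted
expected cost-to-go `J`. Here `p i u` may be any vector of weights, not only a probability
vector. -/
def qFactor (α : R) (p g : ∀ i, A i → X → R) (J : X → R) (i : X) (u : A i) : R :=
  ∑ j, p i u j * (g i u j + α * J j)

/-- The Bellman operator, which minimizes the Q-factors over the actions `U i` available in each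
state `i`. -/
def bellmanOperator [LinearOrder R] (α : R) (U : ∀ i, Finset (A i)) (hU : ∀ i, (U i).Nonempty)
    (p g : ∀ i, A i → X → R) (J : X → R) (i : X) : R :=
  (U i).inf' (hU i) (qFactor α p g J i)

lemma qFactor_sub_qFactor (α : R) (p g : ∀ i, A i → X → R) (J J' : X → R) (i : X) (u : A i) :
    qFactor α p g J i u - qFactor α p g J' i u = α * ∑ j, p i u j * (J j - J' j) := by
  rw [qFactor, qFactor, ← sum_sub_distrib, mul_sum]
  exact sum_congr rfl fun j _ => by ring

variable [LinearOrder R] [IsOrderedRing R]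

lemma abs_qFactor_sub_qFactor_le (α : R) {p : ∀ i, A i → X → R} (g : ∀ i, A i → X → R)
    {J J' : X → R} {c : R} {i : X} {u : A i} (hp : ∑ j, |p i u j| ≤ 1)
    (hJ : ∀ j, |J j - J' j| ≤ c) :
    |qFactor α p g J i u - qFactor α p g J' i u| ≤ |α| * c := by
  have hc : 0 ≤ c := (abs_nonneg _).trans (hJ i)
  calc |qFactor α p g J i u - qFactor α p g J' i u|
      = |α| * |∑ j, p i u j * (J j - J' j)| := by rw [qFactor_sub_qFactor, abs_mul]
    _ ≤ |α| * ((∑ j, |p i u j|) * c) := by gcongr; exact abs_sum_mul_le_sum_abs_mul fun j _ => hJ j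
    _ ≤ |α| * c := by gcongr; exact mul_le_of_le_one_left hc hp

theorem stmt10_general [Nonempty X] (α : R) (U : ∀ i, Finset (A i)) (hU : ∀ i, (U i).Nonempty)
    (p g : ∀ i, A i → X → R) (hp : ∀ i, ∀ u ∈ U i, ∑ j, |p i u j| ≤ 1) (J J' : X → R) :
    univ.sup' univ_nonempty
        (fun i => |bellmanOperator α U hU p g J i - bellmanOperator α U hU p g J' i|) ≤
      |α| * univ.sup' univ_nonempty (fun j => |J j - J' j|) :=
  sup'_le _ _ fun i _ => abs_inf'_sub_inf'_le (hU i) fun u hu =>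
    abs_qFactor_sub_qFactor_le α g (hp i u hu) fun j =>
      le_sup' (fun j => |J j - J' j|) (mem_univ j)

end Bellman

theorem stmt10
    {n : ℕ} (hn : 0 < n)
    {A : Type*}
    (α : ℝ) (hα0 : 0 ≤ α) (hα1 : α < 1)
    (U : Fin n → Finset A) (hU : ∀ i, (U i).Nonempty)
    (p : Fin n → A → Fin n → ℝ) (g : Fin n → A → Fin n → ℝ)
    (hp0 : ∀ i, ∀ u ∈ U i, ∀ j, 0 ≤ p i u j)
    (hp1 : ∀ i, ∀ u ∈ U i, ∑ j, p i u j = 1)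
    (T : (Fin n → ℝ) → (Fin n → ℝ))
    (hT : ∀ (J : Fin n → ℝ) (i : Fin n),
      T J i = (U i).inf' (hU i) (fun u => ∑ j, p i u j * (g i u j + α * J j)))
    :
    ∀ J J' : Fin n → ℝ,
      Finset.univ.sup' (Finset.univ_nonempty_iff.mpr ⟨⟨0, hn⟩⟩ : (Finset.univ : Finset (Fin n)).Nonempty) (fun i => |T J i - T J' i|) ≤
        α * Finset.univ.sup' (Finset.univ_nonempty_iff.mpr ⟨⟨0, hn⟩⟩ : (Finset.univ : Finset (Fin n)).Nonempty) (fun j => |J j - J' j|) := by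
  obtain rfl : T = bellmanOperator α U hU p g := funext₂ hT
  have : Nonempty (Fin n) := ⟨⟨0, hn⟩⟩
  have hp (i) (u) (hu : u ∈ U i) : ∑ j, |p i u j| ≤ 1 := by
    simp only [abs_of_nonneg (hp0 i u hu _), hp1 i u hu, le_refl]
  simpa only [abs_of_nonneg hα0] using stmt10_general α U hU p g hp
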